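/- Fix an integer n ≥ 1. Let Ω₁ ∈ τ_s(ℍ_s^n) be real-path-connected, let Ω₂ ∈ τ_s(ℍ_s^n) be Ω₁-stem-preserving, and let f ∈ 𝒮ℛ(Ω₂). Then the stem function F_{Ω₁}^f : 𝒫(ℂ^n, Ω₁) → ℍ^{2×1} is holomorphic on 𝒫(ℂ^n, Ω₁), i.e. for every γ ∈ 𝒫(ℂ^n, Ω₁) there exists r > 0 with B_{𝒫(ℂ^n)}(γ, r) ⊆ 𝒫(ℂ^n, Ω₁) such that (∂/∂x_ℓ + σ·∂/∂y_ℓ)(F_{Ω₁}^f ∘ 𝓛_γ)(x + yi) = 0 for every x + yi ∈ B_{ℂ^n}(γ(1), r) and every ℓ ∈ {1,…,n}. -/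

import Mathlib

open scoped ENNReal NNReal

noncomputable section

/-- The real quaternions. -/
abbrev ℍ := Quaternion ℝ

/-- The set `𝕊` of imaginary units of the quaternions. -/
def QS : Set ℍ := {I | I ^ 2 = -1}

/-- `Ψ_i^I : ℂ^n → ℂ_I^n ⊆ ℍ^n`, sending `x + y i` to `x + y I` componentwise. -/
def PsiI (n : ℕ) (I : ℍ) (z : Fin n → ℂ) : Fin n → ℍ :=
  fun ℓ => algebraMap ℝ ℍ (z ℓ).re + (z ℓ).im • I

/-- The slice `ℂ_I^n = (ℝ + ℝ I)^n ⊆ ℍ^n`. -/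
def sliceCn (n : ℕ) (I : ℍ) : Set (Fin n → ℍ) := Set.range (PsiI n I)

/-- The weakly slice cone `ℍ_s^n = ⋃_{I ∈ 𝕊} ℂ_I^n`. -/
def weakSliceCone (n : ℕ) : Set (Fin n → ℍ) := ⋃ I ∈ QS, sliceCn n I

/-- `Ω` is slice open (i.e. `Ω ∈ τ_s(ℍ_s^n)`): `Ω ⊆ ℍ_s^n` and each slice
`Ω_I = Ω ∩ ℂ_I^n` is open in `ℂ_I^n`, encoded via the homeomorphism `Ψ_i^I`. -/
def sliceOpen (n : ℕ) (Ω : Set (Fin n → ℍ)) : Prop :=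
  Ω ⊆ weakSliceCone n ∧ ∀ I ∈ QS, IsOpen (PsiI n I ⁻¹' Ω)

/-- The set `𝒫(ℂ^n)` of continuous paths `[0,1] → ℂ^n` with real start point,
encoded as functions `ℝ → ℂ^n` continuous on `[0,1]`. -/
def PathsC (n : ℕ) : Set (ℝ → Fin n → ℂ) :=
  {γ | ContinuousOn γ (Set.Icc 0 1) ∧ ∀ ℓ, (γ 0 ℓ).im = 0}

/-- `γ^I([0,1]) ⊆ Ω`. -/
def pathInSlice (n : ℕ) (Ω : Set (Fin n → ℍ)) (I : ℍ) (γ : ℝ → Fin n → ℂ) : Prop :=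
  ∀ t ∈ Set.Icc (0 : ℝ) 1, PsiI n I (γ t) ∈ Ω

/-- The set `𝕊(Ω, γ) = {I ∈ 𝕊 : γ^I ⊆ Ω}`. -/
def sliceUnits (n : ℕ) (Ω : Set (Fin n → ℍ)) (γ : ℝ → Fin n → ℂ) : Set ℍ :=
  {I | I ∈ QS ∧ pathInSlice n Ω I γ}

/-- The set `𝒫(ℂ^n, Ω)`. -/
def PathsIn (n : ℕ) (Ω : Set (Fin n → ℍ)) : Set (ℝ → Fin n → ℂ) :=
  {γ | γ ∈ PathsC n ∧ ∃ I, I ∈ sliceUnits n Ω γ}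

/-- The straight segment `𝓛_z^w(t) = (1 - t)z + tw`. -/
def segPath (n : ℕ) (z w : Fin n → ℂ) : ℝ → Fin n → ℂ :=
  fun t => (1 - t) • z + t • w

/-- Concatenation of paths. -/
def concatP (n : ℕ) (γ δ : ℝ → Fin n → ℂ) : ℝ → Fin n → ℂ :=
  fun t => if t ≤ 1 / 2 then γ (2 * t) else δ (2 * t - 1)

/-- `𝓛_γ(z) := γ ∘ 𝓛_{γ(1)}^z`, the extension of `γ` by the segment from `γ(1)` to `z`. -/
def extendPath (n : ℕ) (γ : ℝ → Fin n → ℂ) (z : Fin n → ℂ) : ℝ → Fin n → ℂ :=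
  concatP n γ (segPath n (γ 1) z)

/-- The ball `B_{𝒫(ℂ^n)}(γ, r)` in path space. -/
def pathBall (n : ℕ) (γ : ℝ → Fin n → ℂ) (r : ℝ) : Set (ℝ → Fin n → ℂ) :=
  {β | ∃ z ∈ Metric.ball (γ 1) r, β = extendPath n γ z}

/-- `B_I(c^I, r) ⊆ Ω_I`, encoded via `Ψ_i^I`. -/
def ballInSlice (n : ℕ) (Ω : Set (Fin n → ℍ)) (I : ℍ) (c : Fin n → ℂ) (r : ℝ) : Prop :=
  ∀ w ∈ Metric.ball c r, PsiI n I w ∈ Ω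

/-- `r_{γ,Ω}`, as an extended nonnegative real. -/
def rPath (n : ℕ) (Ω : Set (Fin n → ℍ)) (γ : ℝ → Fin n → ℂ) : ℝ≥0∞ :=
  sSup {x : ℝ≥0∞ | ∃ r : ℝ≥0, x = r ∧ pathBall n γ r ⊆ PathsIn n Ω}

/-- `r^{𝕊'}_{γ,Ω}`, as an extended nonnegative real. -/
def rSliceSet (n : ℕ) (Ω : Set (Fin n → ℍ)) (γ : ℝ → Fin n → ℂ) (S' : Set ℍ) : ℝ≥0∞ :=
  sSup {x : ℝ≥0∞ | ∃ r : ℝ≥0, x = r ∧ ∀ I ∈ S', ballInSlice n Ω I (γ 1) r}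

/-- `r²_{γ,Ω}`, as an extended nonnegative real. -/
def r2Slice (n : ℕ) (Ω : Set (Fin n → ℍ)) (γ : ℝ → Fin n → ℂ) : ℝ≥0∞ :=
  sSup {x : ℝ≥0∞ | ∃ S'' : Set ℍ, S'' ⊆ sliceUnits n Ω γ ∧ S''.Nontrivial ∧ x = rSliceSet n Ω γ S''}

/-- `r^I_{γ,Ω}`, as an extended nonnegative real. -/
def rISlice (n : ℕ) (Ω : Set (Fin n → ℍ)) (γ : ℝ → Fin n → ℂ) (I : ℍ) : ℝ≥0∞ :=
  sSup {x : ℝ≥0∞ | ∃ r : ℝ≥0, x = r ∧ ballInSlice n Ω I (γ 1) r}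

/-- `Ω` is real-path-connected. -/
def realPathConnected (n : ℕ) (Ω : Set (Fin n → ℍ)) : Prop :=
  ∀ q ∈ Ω, ∃ γ ∈ PathsIn n Ω, ∃ I ∈ sliceUnits n Ω γ, PsiI n I (γ 1) = q

/-- `Ω₂` is `Ω₁`-stem-preserving. -/
def stemPreserving (n : ℕ) (Ω₁ Ω₂ : Set (Fin n → ℍ)) : Prop :=
  (∀ γ ∈ PathsIn n Ω₁, (sliceUnits n Ω₂ γ).Nontrivial) ∧
  (∀ α ∈ PathsIn n Ω₁, ∀ β ∈ PathsIn n Ω₁, α 1 = β 1 →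
    ¬ ∃ I, sliceUnits n Ω₂ α ∩ sliceUnits n Ω₂ β = {I})

/-- `F : 𝒫(ℂ^n, Ω) → ℍ^{2×1}` is a (path-slice) stem function of `f`:
`f(γ^I(1)) = (1, I)·F(γ)`. -/
def isStemOf (n : ℕ) (Ω : Set (Fin n → ℍ)) (f : (Fin n → ℍ) → ℍ)
    (F : (ℝ → Fin n → ℂ) → ℍ × ℍ) : Prop :=
  ∀ γ ∈ PathsIn n Ω, ∀ I ∈ sliceUnits n Ω γ, f (PsiI n I (γ 1)) = (F γ).1 + I * (F γ).2

/-- `f` is a path-slice function on `Ω`. -/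
def PathSliceFn (n : ℕ) (Ω : Set (Fin n → ℍ)) (f : (Fin n → ℍ) → ℍ) : Prop :=
  ∃ F, isStemOf n Ω f F

/-- `f` is (weakly) slice regular on `Ω`: each restriction `f_I` is real differentiable
and satisfies the Cauchy-Riemann equations `(∂/∂x_ℓ + I ∂/∂y_ℓ) f_I = 0`. -/
def SliceRegular (n : ℕ) (Ω : Set (Fin n → ℍ)) (f : (Fin n → ℍ) → ℍ) : Prop :=
  ∀ I ∈ QS,
    DifferentiableOn ℝ (fun z => f (PsiI n I z)) (PsiI n I ⁻¹' Ω) ∧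
    ∀ z ∈ PsiI n I ⁻¹' Ω, ∀ ℓ : Fin n,
      fderivWithin ℝ (fun z => f (PsiI n I z)) (PsiI n I ⁻¹' Ω) z (Pi.single ℓ 1)
        + I * fderivWithin ℝ (fun z => f (PsiI n I z)) (PsiI n I ⁻¹' Ω) z
            (Pi.single ℓ Complex.I) = 0

open Classical in
/-- `F_{Ω₁}^f` : a choice of stem function of the path-slice function `f : Ω₂ → ℍ`
(its restriction to `𝒫(ℂ^n, Ω₁)` is independent of the choice). -/
def stemF (n : ℕ) (Ω₂ : Set (Fin n → ℍ)) (f : (Fin n → ℍ) → ℍ) :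
    (ℝ → Fin n → ℂ) → ℍ × ℍ :=
  if h : ∃ F, isStemOf n Ω₂ f F then h.choose else fun _ => 0

open Classical in
/-- The map `ℑ : ℍ_s^n → 𝕊 ∪ {0}`. -/
def scrI {n : ℕ} (q : Fin n → ℍ) : ℍ :=
  if h : (Finset.univ.filter fun ℓ : Fin n => Quaternion.im (q ℓ) ≠ 0).Nonempty then
    ‖Quaternion.im (q ((Finset.univ.filter
        fun ℓ : Fin n => Quaternion.im (q ℓ) ≠ 0).min' h))‖⁻¹ •
      Quaternion.im (q ((Finset.univ.filter
        fun ℓ : Fin n => Quaternion.im (q ℓ) ≠ 0).min' h))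
  else 0

open Classical in
/-- The map `ℱ_{Ω₁}^g : Ω₁ → ℍ^{2×1}`. -/
def scrF (n : ℕ) (Ω₁ Ω₂ : Set (Fin n → ℍ)) (g : (Fin n → ℍ) → ℍ) (q : Fin n → ℍ) :
    ℍ × ℍ :=
  if h : (∃ ℓ, Quaternion.im (q ℓ) ≠ 0) ∧
      ∃ γ, γ ∈ PathsIn n Ω₁ ∧ pathInSlice n Ω₁ (scrI q) γ ∧ PsiI n (scrI q) (γ 1) = q then
    stemF n Ω₂ g h.2.choose
  else (g q, 0)

/-- The `*`-product `(f*g)(q) = (f(q), ℑ(q)f(q))·ℱ_{Ω₁}^g(q)`. -/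
def starProd (n : ℕ) (Ω₁ Ω₂ : Set (Fin n → ℍ)) (f g : (Fin n → ℍ) → ℍ) :
    (Fin n → ℍ) → ℍ :=
  fun q => f q * (scrF n Ω₁ Ω₂ g q).1 + scrI q * f q * (scrF n Ω₁ Ω₂ g q).2

/-- Componentwise complex conjugate of a path. -/
def conjPath (n : ℕ) (γ : ℝ → Fin n → ℂ) : ℝ → Fin n → ℂ :=
  fun t ℓ => starRingEnd ℂ (γ t ℓ)

end

/-!
If `I ≠ J` are two units whose copies of `γ` lie in `Ω₂`, the matrix `M = [[1, I], [1, J]]` is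
invertible, and any stem function `F` satisfies `F(𝓛_γ(z)) = M⁻¹ (f_I(z), f_J(z))` for `z` near
`γ(1)`. Since `(1, I) σ = I (1, I)`, the matrix `M⁻¹` turns left multiplication by `I` and `J` on
the two entries into `σ`, so the Cauchy–Riemann equations of `f_I` and `f_J` become those of `F`.

A stem function exists because, for a third unit `K`, the functions `f_K` and
`(1, K) M⁻¹ (f_I, f_J)` are both holomorphic for left multiplication by `K` and agree on `ℝ^n`; by
the identity theorem they agree along the whole path `γ`, which starts in `ℝ^n`.
-/

open Complex Filter Metric Set Topology

section CauchyRiemann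

variable {V E F : Type*} [NormedAddCommGroup V] [NormedSpace ℂ V] [NormedSpace ℝ V]
  [NormedAddCommGroup E] [NormedSpace ℝ E] [NormedAddCommGroup F] [NormedSpace ℝ F]

/-- The Cauchy–Riemann condition at `z` for a function on a complex space, relative to an operator
`J` that plays the role of multiplication by the imaginary unit in the target: the real derivative
intertwines `i` and `J`. The target is not given a complex structure, so that the left
multiplications by different units of `ℍ` can be compared. -/
def CauchyRiemannAt (J : E →L[ℝ] E) (g : V → E) (z : V) : Prop :=
  ∃ D : V →L[ℝ] E, HasFDerivAt g D z ∧ ∀ v, D (I • v) = J (D v)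

namespace CauchyRiemannAt

variable {J : E →L[ℝ] E} {K : F →L[ℝ] F} {g h : V → E} {z : V}

theorem differentiableAt (hg : CauchyRiemannAt J g z) : DifferentiableAt ℝ g z :=
  let ⟨_, hD, _⟩ := hg
  hD.differentiableAt

theorem fderiv_I_smul (hg : CauchyRiemannAt J g z) (v : V) :
    fderiv ℝ g z (I • v) = J (fderiv ℝ g z v) := by
  obtain ⟨D, hD, hDJ⟩ := hg
  rw [hD.fderiv, hDJ]

theorem congr_of_eventuallyEq (hg : CauchyRiemannAt J g z) (hgh : h =ᶠ[𝓝 z] g) :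
    CauchyRiemannAt J h z :=
  let ⟨D, hD, hDJ⟩ := hg
  ⟨D, hD.congr_of_eventuallyEq hgh, hDJ⟩

theorem sub (hg : CauchyRiemannAt J g z) (hh : CauchyRiemannAt J h z) :
    CauchyRiemannAt J (fun w => g w - h w) z := by
  obtain ⟨D, hD, hDJ⟩ := hg
  obtain ⟨D', hD', hDJ'⟩ := hh
  exact ⟨D - D', hD.sub hD', fun v => by simp only [sub_apply, hDJ, hDJ', map_sub]⟩

theorem prodMk {k : V → F} (hg : CauchyRiemannAt J g z) (hk : CauchyRiemannAt K k z) :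
    CauchyRiemannAt (J.prodMap K) (fun w => (g w, k w)) z := by
  obtain ⟨D, hD, hDJ⟩ := hg
  obtain ⟨D', hD', hDK⟩ := hk
  exact ⟨D.prod D', hD.prodMk hD', fun v => Prod.ext (hDJ v) (hDK v)⟩

theorem clm_comp (T : E →L[ℝ] F) (hT : ∀ x, T (J x) = K (T x)) (hg : CauchyRiemannAt J g z) :
    CauchyRiemannAt K (fun w => T (g w)) z := by
  obtain ⟨D, hD, hDJ⟩ := hg
  refine ⟨T.comp D, T.hasFDerivAt.comp z hD, fun v => ?_⟩
  simp only [ContinuousLinearMap.comp_apply, hDJ, hT]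

theorem comp_complexLine [IsScalarTower ℝ ℂ V] {a v : V} {t : ℂ}
    (hg : CauchyRiemannAt J g (a + t • v)) : CauchyRiemannAt J (fun s : ℂ => g (a + s • v)) t := by
  obtain ⟨D, hD, hDJ⟩ := hg
  have hline : HasFDerivAt (fun s : ℂ => a + s • v)
      ((ContinuousLinearMap.toSpanSingleton ℂ v).restrictScalars ℝ) t :=
    ((ContinuousLinearMap.toSpanSingleton ℂ v).restrictScalars ℝ).hasFDerivAt.const_add a
  refine ⟨_, hD.comp t hline, fun s => ?_⟩
  simp only [ContinuousLinearMap.comp_apply, ContinuousLinearMap.coe_restrictScalars',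
    ContinuousLinearMap.toSpanSingleton_apply, smul_assoc, hDJ]

theorem differentiableAt_complex {k : ℂ → ℂ} {t : ℂ}
    (hk : CauchyRiemannAt (ContinuousLinearMap.mul ℝ ℂ I) k t) : DifferentiableAt ℂ k t := by
  refine differentiableAt_complex_iff_differentiableAt_real.2 ⟨hk.differentiableAt, ?_⟩
  simpa using hk.fderiv_I_smul 1

end CauchyRiemannAt

theorem cauchyRiemannAt_of_partials {ι : Type*} [Fintype ι] [DecidableEq ι] {J : E →L[ℝ] E}
    (hJ : ∀ x, J (J x) = -x) {g : (ι → ℂ) → E} {z : ι → ℂ} (hg : DifferentiableAt ℝ g z)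
    (hpartial : ∀ ℓ, fderiv ℝ g z (Pi.single ℓ 1) + J (fderiv ℝ g z (Pi.single ℓ I)) = 0) :
    CauchyRiemannAt J g z := by
  have hI : ∀ ℓ, fderiv ℝ g z (Pi.single ℓ I) = J (fderiv ℝ g z (Pi.single ℓ 1)) := fun ℓ => by
    rw [eq_neg_of_add_eq_zero_left (hpartial ℓ), map_neg, hJ, neg_neg]
  refine ⟨fderiv ℝ g z, hg.hasFDerivAt, fun v => ?_⟩
  have hlin : (fderiv ℝ g z).toLinearMap ∘ₗ (LinearMap.lsmul ℂ (ι → ℂ) I).restrictScalars ℝ =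
      J.toLinearMap ∘ₗ (fderiv ℝ g z).toLinearMap := by
    refine LinearMap.pi_ext' fun ℓ => Complex.basisOneI.ext fun k => ?_
    fin_cases k
    · simpa [← Pi.single_smul] using hI ℓ
    · simp [← Pi.single_smul, Pi.single_neg, hI, hJ]
  exact LinearMap.congr_fun hlin v

section IdentityTheorem

variable {J : E →L[ℝ] E}

/-- Composing with `x ↦ φ x - i φ (J x)`, which intertwines `J` and `i`, reduces the claim to the
identity theorem for scalar holomorphic functions. -/
theorem eqOn_zero_of_cauchyRiemannAt_of_frequently_eq_zero (hJ : ∀ x, J (J x) = -x) {g : ℂ → E}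
    {U : Set ℂ} (hU : IsOpen U) (hUc : IsPreconnected U) (hg : ∀ t ∈ U, CauchyRiemannAt J g t)
    {t₀ : ℂ} (ht₀ : t₀ ∈ U) (hzero : ∃ᶠ t in 𝓝[≠] t₀, g t = 0) : EqOn g 0 U := by
  intro t ht
  refine SeparatingDual.eq_zero_of_forall_dual_eq_zero (R := ℝ) fun φ => ?_
  let T : E →L[ℝ] ℂ := ofRealCLM.comp φ - (ContinuousLinearMap.mul ℝ ℂ I).comp
    (ofRealCLM.comp (φ.comp J))
  have hTapply : ∀ x, T x = φ x - I * φ (J x) := fun _ => rfl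
  have hT : ∀ x, T (J x) = ContinuousLinearMap.mul ℝ ℂ I (T x) := fun x => by
    simp only [hTapply, ContinuousLinearMap.mul_apply', hJ, map_neg, ofReal_neg]
    linear_combination (φ (J x) : ℂ) * I_mul_I
  have hdiff : DifferentiableOn ℂ (fun s => T (g s)) U := fun s hs =>
    ((hg s hs).clm_comp T hT).differentiableAt_complex.differentiableWithinAt
  have hTg : T (g t) = 0 :=
    (hdiff.analyticOnNhd hU).eqOn_zero_of_preconnected_of_frequently_eq_zero hUc ht₀
      (hzero.mono fun s hs => by simp only [hs, map_zero]) ht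
  simpa [hTapply] using congrArg Complex.re hTg

variable [IsScalarTower ℝ ℂ V] {g : V → E}

theorem eq_zero_of_frequently_eq_zero_on_complexLine (hJ : ∀ x, J (J x) = -x) {C : Set V}
    (hC : IsOpen C) (hCc : Convex ℝ C) (hg : ∀ z ∈ C, CauchyRiemannAt J g z) {a v : V} (ha : a ∈ C)
    (hzero : ∃ᶠ t in 𝓝[≠] (0 : ℂ), g (a + t • v) = 0) {t : ℂ} (ht : a + t • v ∈ C) :
    g (a + t • v) = 0 := by
  let L : Set ℂ := {s | a + s • v ∈ C}
  have hL : IsOpen L := hC.preimage (by fun_prop)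
  have hLc : Convex ℝ L := (hCc.translate_preimage_right a).linear_preimage
    ((LinearMap.toSpanSingleton ℂ V v).restrictScalars ℝ)
  have h0 : (0 : ℂ) ∈ L := by simpa [L] using ha
  exact eqOn_zero_of_cauchyRiemannAt_of_frequently_eq_zero hJ hL hLc.isPreconnected
    (fun s hs => (hg _ hs).comp_complexLine) h0 hzero ht

theorem eqOn_zero_of_convex_of_eventuallyEq_zero (hJ : ∀ x, J (J x) = -x) {C : Set V}
    (hC : IsOpen C) (hCc : Convex ℝ C) (hg : ∀ z ∈ C, CauchyRiemannAt J g z) {a : V} (ha : a ∈ C)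
    (hzero : g =ᶠ[𝓝 a] 0) : EqOn g 0 C := by
  intro w hw
  have hline : Tendsto (fun t : ℂ => a + t • (w - a)) (𝓝[≠] 0) (𝓝 a) :=
    (Continuous.tendsto' (by fun_prop) 0 a (by simp)).mono_left nhdsWithin_le_nhds
  have hw1 : a + (1 : ℂ) • (w - a) = w := by rw [one_smul, add_sub_cancel]
  rw [← hw1] at hw ⊢
  exact eq_zero_of_frequently_eq_zero_on_complexLine hJ hC hCc hg ha
    (hline.eventually hzero).frequently hw

theorem eqOn_zero_of_isPreconnected_of_eventuallyEq_zero (hJ : ∀ x, J (J x) = -x) {S : Set V}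
    (hS : IsPreconnected S) (hg : ∀ z ∈ S, ∀ᶠ w in 𝓝 z, CauchyRiemannAt J g w) {a : V}
    (ha : a ∈ S) (hzero : g =ᶠ[𝓝 a] 0) : EqOn g 0 S := by
  let Z : Set V := {z | g =ᶠ[𝓝 z] 0}
  have hZ : IsOpen Z := isOpen_setOfPred_eventually_nhds
  have hclosed : closure Z ∩ S ⊆ Z := by
    rintro z ⟨hzZ, hzS⟩
    obtain ⟨ε, hε, hball⟩ := Metric.eventually_nhds_iff_ball.1 (hg z hzS)
    obtain ⟨b, hbZ, hzb⟩ := Metric.mem_closure_iff.1 hzZ ε hε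
    exact (eqOn_zero_of_convex_of_eventuallyEq_zero hJ isOpen_ball (convex_ball z ε) hball
      (mem_ball'.2 hzb) hbZ).eventuallyEq_of_mem (ball_mem_nhds z hε)
  exact fun z hz => (hS.subset_of_closure_inter_subset hZ ⟨a, ha, hzero⟩ hclosed hz).eq_of_nhds

/-- A point `x + yi` near `a` lies on the complex line `t ↦ x + ty`, whose real points are points
of `ℝ^ι`; there the one-variable identity theorem applies. -/
theorem eventuallyEq_zero_of_eq_zero_on_real {ι : Type*} [Fintype ι] (hJ : ∀ x, J (J x) = -x)
    {g : (ι → ℂ) → E} {a : ι → ℂ} (ha : ∀ ℓ, (a ℓ).im = 0)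
    (hg : ∀ᶠ w in 𝓝 a, CauchyRiemannAt J g w)
    (hzero : ∀ᶠ w in 𝓝 a, (∀ ℓ, (w ℓ).im = 0) → g w = 0) : g =ᶠ[𝓝 a] 0 := by
  obtain ⟨ε, hε, hball⟩ := Metric.eventually_nhds_iff_ball.1 (hg.and hzero)
  filter_upwards [ball_mem_nhds a hε] with w hw
  let x : ι → ℂ := fun ℓ => ((w ℓ).re : ℂ)
  let y : ι → ℂ := fun ℓ => ((w ℓ).im : ℂ)
  have hx : x ∈ ball a ε := by
    refine mem_ball.2 (lt_of_le_of_lt ((dist_pi_le_iff dist_nonneg).2 fun ℓ => ?_) (mem_ball.1 hw))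
    have hre : x ℓ - a ℓ = ((w ℓ - a ℓ).re : ℂ) :=
      Complex.ext (by simp [x]) (by simp [x, ha ℓ])
    rw [dist_eq, hre, norm_real]
    exact (abs_re_le_norm _).trans ((dist_eq (w ℓ) (a ℓ)).symm.trans_le (dist_le_pi_dist w a ℓ))
  have hxy : x + I • y = w := funext fun ℓ => by
    simpa [x, y, mul_comm] using re_add_im (w ℓ)
  have hnear : ∀ᶠ t : ℝ in 𝓝[≠] 0, x + (t : ℂ) • y ∈ ball a ε :=
    ((Continuous.tendsto' (by fun_prop) 0 x (by simp)).mono_left nhdsWithin_le_nhds).eventually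
      (isOpen_ball.mem_nhds hx)
  have hreal : ∀ᶠ t : ℝ in 𝓝[≠] 0, g (x + (t : ℂ) • y) = 0 :=
    hnear.mono fun t ht => (hball _ ht).2 fun ℓ => by simp [x, y]
  have hofReal : Tendsto ofReal (𝓝[≠] 0) (𝓝[≠] 0) :=
    continuous_ofReal.continuousWithinAt.tendsto_nhdsWithin fun t ht => ofReal_ne_zero.2 ht
  rw [← hxy] at hw ⊢
  exact eq_zero_of_frequently_eq_zero_on_complexLine hJ isOpen_ball (convex_ball a ε)
    (fun z hz => (hball z hz).1) hx (hofReal.frequently hreal.frequently) hw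

end IdentityTheorem

end CauchyRiemann

section StemValues

/-- The left action of the matrix `σ = [[0, -1], [1, 0]]` on columns with entries in `E`. -/
noncomputable def stemRotation (E : Type*) [NormedAddCommGroup E] [NormedSpace ℝ E] :
    E × E →L[ℝ] E × E :=
  (-ContinuousLinearMap.snd ℝ E E).prod (ContinuousLinearMap.fst ℝ E E)

/-- The row `(1, I)` acting on columns of quaternions: the value on the slice `ℂ_I^n` determined
by a value of a stem function. -/
noncomputable def stemEval (I : ℍ) : ℍ × ℍ →L[ℝ] ℍ :=
  ContinuousLinearMap.fst ℝ ℍ ℍ + (ContinuousLinearMap.mul ℝ ℍ I).comp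
    (ContinuousLinearMap.snd ℝ ℍ ℍ)

theorem stemEval_apply (I : ℍ) (p : ℍ × ℍ) : stemEval I p = p.1 + I * p.2 := rfl

theorem mul_mul_of_mem_QS {I : ℍ} (hI : I ∈ QS) (q : ℍ) : I * (I * q) = -q := by
  have hII : I * I = -1 := by rw [← pow_two]; exact hI
  rw [← mul_assoc, hII, neg_one_mul]

theorem stemEval_stemRotation {I : ℍ} (hI : I ∈ QS) (p : ℍ × ℍ) :
    stemEval I (stemRotation ℍ p) = I * stemEval I p := by
  simp only [stemEval_apply, mul_add, mul_mul_of_mem_QS hI, stemRotation,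
    ContinuousLinearMap.prod_apply, neg_apply, ContinuousLinearMap.coe_fst',
    ContinuousLinearMap.coe_snd']
  abel

/-- The invertible matrix `[[1, I], [1, J]]` attached to two different quaternions: a column is
determined by its values on two slices. -/
noncomputable def stemEvalEquiv {I J : ℍ} (hIJ : I ≠ J) : (ℍ × ℍ) ≃L[ℝ] ℍ × ℍ :=
  have hne : I - J ≠ 0 := sub_ne_zero.2 hIJ
  let diff : ℍ × ℍ →L[ℝ] ℍ := (ContinuousLinearMap.mul ℝ ℍ (I - J)⁻¹).comp
    (ContinuousLinearMap.fst ℝ ℍ ℍ - ContinuousLinearMap.snd ℝ ℍ ℍ)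
  .equivOfInverse ((stemEval I).prod (stemEval J))
    ((ContinuousLinearMap.fst ℝ ℍ ℍ - (ContinuousLinearMap.mul ℝ ℍ I).comp diff).prod diff)
    (fun p => by
      have hdiff : diff (stemEval I p, stemEval J p) = p.2 := by
        change (I - J)⁻¹ * (p.1 + I * p.2 - (p.1 + J * p.2)) = p.2
        rw [add_sub_add_left_eq_sub, ← sub_mul, inv_mul_cancel_left₀ hne]
      refine Prod.ext ?_ hdiff
      change p.1 + I * p.2 - I * diff (stemEval I p, stemEval J p) = p.1
      rw [hdiff, add_sub_cancel_right])
    (fun p => by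
      have hdiff : (I - J) * diff p = p.1 - p.2 := mul_inv_cancel_left₀ hne _
      refine Prod.ext (sub_add_cancel p.1 (I * diff p)) ?_
      change p.1 - I * diff p + J * diff p = p.2
      rw [sub_add, ← sub_mul, hdiff, sub_sub_cancel])

theorem stemEvalEquiv_apply {I J : ℍ} (hIJ : I ≠ J) (p : ℍ × ℍ) :
    stemEvalEquiv hIJ p = (stemEval I p, stemEval J p) := rfl

theorem stemEvalEquiv_symm_diag {I J : ℍ} (hIJ : I ≠ J) (q : ℍ) :
    (stemEvalEquiv hIJ).symm (q, q) = (q, 0) := by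
  rw [ContinuousLinearEquiv.symm_apply_eq]
  simp only [stemEvalEquiv_apply, stemEval_apply, mul_zero, add_zero]

theorem stemEvalEquiv_symm_mul {I J : ℍ} (hI : I ∈ QS) (hJ : J ∈ QS) (hIJ : I ≠ J)
    (p : ℍ × ℍ) :
    (stemEvalEquiv hIJ).symm (I * p.1, J * p.2) =
      stemRotation ℍ ((stemEvalEquiv hIJ).symm p) := by
  obtain ⟨s, rfl⟩ := (stemEvalEquiv hIJ).surjective p
  rw [ContinuousLinearEquiv.symm_apply_eq, ContinuousLinearEquiv.symm_apply_apply]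
  simp only [stemEvalEquiv_apply, stemEval_stemRotation hI, stemEval_stemRotation hJ]

theorem CauchyRiemannAt.stemEvalEquiv_symm {V : Type*} [NormedAddCommGroup V] [NormedSpace ℂ V]
    [NormedSpace ℝ V] {I J : ℍ} (hI : I ∈ QS) (hJ : J ∈ QS) (hIJ : I ≠ J) {g h : V → ℍ} {z : V}
    (hg : CauchyRiemannAt (ContinuousLinearMap.mul ℝ ℍ I) g z)
    (hh : CauchyRiemannAt (ContinuousLinearMap.mul ℝ ℍ J) h z) :
    CauchyRiemannAt (stemRotation ℍ) (fun w => (stemEvalEquiv hIJ).symm (g w, h w)) z :=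
  (hg.prodMk hh).clm_comp ((stemEvalEquiv hIJ).symm : ℍ × ℍ →L[ℝ] ℍ × ℍ)
    (stemEvalEquiv_symm_mul hI hJ hIJ)

theorem cauchyRiemann_equations_of_stemRotation {ι : Type*} [Fintype ι] [DecidableEq ι]
    {E : Type*} [NormedAddCommGroup E] [NormedSpace ℝ E] {F : (ι → ℂ) → E × E} {U : Set (ι → ℂ)}
    (hU : IsOpen U) (hF : ∀ z ∈ U, CauchyRiemannAt (stemRotation E) F z) :
    DifferentiableOn ℝ F U ∧ ∀ z ∈ U, ∀ ℓ,
      (fderivWithin ℝ F U z (Pi.single ℓ 1)).1 - (fderivWithin ℝ F U z (Pi.single ℓ I)).2 = 0 ∧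
      (fderivWithin ℝ F U z (Pi.single ℓ 1)).2 + (fderivWithin ℝ F U z (Pi.single ℓ I)).1 = 0 := by
  refine ⟨fun z hz => (hF z hz).differentiableAt.differentiableWithinAt, fun z hz ℓ => ?_⟩
  have hsingle : (Pi.single ℓ I : ι → ℂ) = I • Pi.single ℓ 1 := by
    rw [← Pi.single_smul, smul_eq_mul, mul_one]
  rw [fderivWithin_of_isOpen hU hz, hsingle, (hF z hz).fderiv_I_smul]
  exact ⟨sub_self _, add_neg_cancel _⟩

end StemValues

section SliceRegularFunctions

variable {n : ℕ} {Ω : Set (Fin n → ℍ)} {f : (Fin n → ℍ) → ℍ}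

theorem PsiI_eq_of_im_eq_zero (I J : ℍ) {z : Fin n → ℂ} (hz : ∀ ℓ, (z ℓ).im = 0) :
    PsiI n I z = PsiI n J z := by
  funext ℓ
  simp only [PsiI, hz ℓ, zero_smul]

theorem sliceOpen.eventually_mem (hΩ : sliceOpen n Ω) {I : ℍ} (hI : I ∈ QS) {z : Fin n → ℂ}
    (hz : PsiI n I z ∈ Ω) : ∀ᶠ w in 𝓝 z, PsiI n I w ∈ Ω :=
  (hΩ.2 I hI).mem_nhds hz

namespace SliceRegular

theorem cauchyRiemannAt (hf : SliceRegular n Ω f) (hΩ : sliceOpen n Ω) {I : ℍ} (hI : I ∈ QS)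
    {z : Fin n → ℂ} (hz : PsiI n I z ∈ Ω) :
    CauchyRiemannAt (ContinuousLinearMap.mul ℝ ℍ I) (fun w => f (PsiI n I w)) z := by
  obtain ⟨hdiff, hCR⟩ := hf I hI
  refine cauchyRiemannAt_of_partials (mul_mul_of_mem_QS hI)
    (hdiff.differentiableAt (hΩ.eventually_mem hI hz)) fun ℓ => ?_
  rw [← fderivWithin_of_isOpen (hΩ.2 I hI) hz]
  exact hCR z hz ℓ

/-- Both sides are holomorphic for the complex structure of the slice `ℂ_K^n` and agree on real
points, so the identity theorem transports the equality along `γ`. -/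
theorem eq_stemEval_stemEvalEquiv_symm (hf : SliceRegular n Ω f) (hΩ : sliceOpen n Ω)
    {γ : ℝ → Fin n → ℂ} (hγ : γ ∈ PathsC n) {I J K : ℍ} (hIJ : I ≠ J)
    (hI : I ∈ sliceUnits n Ω γ) (hJ : J ∈ sliceUnits n Ω γ) (hK : K ∈ sliceUnits n Ω γ) :
    f (PsiI n K (γ 1)) =
      stemEval K ((stemEvalEquiv hIJ).symm (f (PsiI n I (γ 1)), f (PsiI n J (γ 1)))) := by
  let g : (Fin n → ℂ) → ℍ := fun z => f (PsiI n K z) -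
    stemEval K ((stemEvalEquiv hIJ).symm (f (PsiI n I z), f (PsiI n J z)))
  have hg : ∀ z ∈ γ '' Icc 0 1, ∀ᶠ w in 𝓝 z,
      CauchyRiemannAt (ContinuousLinearMap.mul ℝ ℍ K) g w := by
    rintro _ ⟨t, ht, rfl⟩
    filter_upwards [hΩ.eventually_mem hI.1 (hI.2 t ht), hΩ.eventually_mem hJ.1 (hJ.2 t ht),
      hΩ.eventually_mem hK.1 (hK.2 t ht)] with w hwI hwJ hwK
    exact (hf.cauchyRiemannAt hΩ hK.1 hwK).sub
      (((hf.cauchyRiemannAt hΩ hI.1 hwI).stemEvalEquiv_symm hI.1 hJ.1 hIJ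
        (hf.cauchyRiemannAt hΩ hJ.1 hwJ)).clm_comp (stemEval K) (stemEval_stemRotation hK.1))
  have hreal : ∀ z : Fin n → ℂ, (∀ ℓ, (z ℓ).im = 0) → g z = 0 := fun z hz => by
    simp only [g, PsiI_eq_of_im_eq_zero I K hz, PsiI_eq_of_im_eq_zero J K hz,
      stemEvalEquiv_symm_diag, stemEval_apply, mul_zero, add_zero, sub_self]
  have hmem₀ : γ 0 ∈ γ '' Icc 0 1 := mem_image_of_mem γ (left_mem_Icc.2 zero_le_one)
  have hmem₁ : γ 1 ∈ γ '' Icc 0 1 := mem_image_of_mem γ (right_mem_Icc.2 zero_le_one)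
  have hzero : g =ᶠ[𝓝 (γ 0)] 0 := eventuallyEq_zero_of_eq_zero_on_real (mul_mul_of_mem_QS hK.1)
    hγ.2 (hg _ hmem₀) (.of_forall hreal)
  exact sub_eq_zero.1 (eqOn_zero_of_isPreconnected_of_eventuallyEq_zero (mul_mul_of_mem_QS hK.1)
    (isPreconnected_Icc.image γ hγ.1) hg hmem₀ hzero hmem₁)

theorem pathSliceFn (hf : SliceRegular n Ω f) (hΩ : sliceOpen n Ω) : PathSliceFn n Ω f := by
  have hvalue : ∀ γ, ∃ p : ℍ × ℍ, γ ∈ PathsC n →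
      ∀ K ∈ sliceUnits n Ω γ, f (PsiI n K (γ 1)) = stemEval K p := by
    intro γ
    rcases (sliceUnits n Ω γ).subsingleton_or_nontrivial with hsub | ⟨I, hI, J, hJ, hIJ⟩
    · rcases (sliceUnits n Ω γ).eq_empty_or_nonempty with hempty | ⟨I, hI⟩
      · exact ⟨0, fun _ K hK => by simp [hempty] at hK⟩
      · refine ⟨(f (PsiI n I (γ 1)), 0), fun _ K hK => ?_⟩
        rw [hsub hK hI, stemEval_apply, mul_zero, add_zero]
    · exact ⟨_, fun hγ K hK => hf.eq_stemEval_stemEvalEquiv_symm hΩ hγ hIJ hI hJ hK⟩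
  choose F hF using hvalue
  exact ⟨F, fun γ hγ => hF γ hγ.1⟩

end SliceRegular

theorem PathSliceFn.isStemOf_stemF (hf : PathSliceFn n Ω f) : isStemOf n Ω f (stemF n Ω f) := by
  rw [stemF, dif_pos (show ∃ F, isStemOf n Ω f F from hf)]
  exact hf.choose_spec

end SliceRegularFunctions

section Paths

variable {n : ℕ} {Ω : Set (Fin n → ℍ)} {I : ℍ} {γ δ : ℝ → Fin n → ℂ}

theorem continuousOn_concatP (hγ : ContinuousOn γ (Icc 0 1)) (hδ : ContinuousOn δ (Icc 0 1))
    (hγδ : γ 1 = δ 0) : ContinuousOn (concatP n γ δ) (Icc 0 1) := by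
  have hleft : ContinuousOn (concatP n γ δ) (Icc 0 (1 / 2)) :=
    (hγ.comp (f := fun t : ℝ => 2 * t) (by fun_prop)
      fun t ht => ⟨by linarith [ht.1], by linarith [ht.2]⟩).congr fun t ht => if_pos ht.2
  have hright : ContinuousOn (concatP n γ δ) (Icc (1 / 2) 1) := by
    refine (hδ.comp (f := fun t : ℝ => 2 * t - 1) (by fun_prop)
      fun t ht => ⟨by linarith [ht.1], by linarith [ht.2]⟩).congr fun t ht => ?_
    rcases ht.1.eq_or_lt with rfl | hlt
    · simp [concatP, hγδ]
    · exact if_neg hlt.not_ge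
  rw [← Icc_union_Icc_eq_Icc (by norm_num : (0 : ℝ) ≤ 1 / 2) (by norm_num)]
  exact hleft.union_of_isClosed hright isClosed_Icc isClosed_Icc

theorem pathInSlice.concat (hγ : pathInSlice n Ω I γ) (hδ : pathInSlice n Ω I δ) :
    pathInSlice n Ω I (concatP n γ δ) := by
  intro t ht
  unfold concatP
  split_ifs with hle
  · exact hγ _ ⟨by linarith [ht.1], by linarith⟩
  · exact hδ _ ⟨by linarith, by linarith [ht.2]⟩

theorem ballInSlice.pathInSlice_segPath {z w : Fin n → ℂ} {r : ℝ} (hball : ballInSlice n Ω I z r)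
    (hw : w ∈ ball z r) : pathInSlice n Ω I (segPath n z w) := fun _ ht =>
  hball _ (convex_ball z r (mem_ball_self (pos_of_mem_ball hw)) hw (sub_nonneg.2 ht.2) ht.1
    (sub_add_cancel 1 _))

theorem extendPath_one (z : Fin n → ℂ) : extendPath n γ z 1 = z := by
  norm_num [extendPath, concatP, segPath]

theorem extendPath_mem_PathsC (hγ : γ ∈ PathsC n) (z : Fin n → ℂ) :
    extendPath n γ z ∈ PathsC n := by
  refine ⟨continuousOn_concatP hγ.1 ?_ ?_, fun ℓ => ?_⟩
  · unfold segPath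
    fun_prop
  · simp [segPath]
  · simpa [extendPath, concatP] using hγ.2 ℓ

theorem mem_sliceUnits_extendPath (hI : I ∈ sliceUnits n Ω γ) {r : ℝ}
    (hball : ballInSlice n Ω I (γ 1) r) {z : Fin n → ℂ} (hz : z ∈ ball (γ 1) r) :
    I ∈ sliceUnits n Ω (extendPath n γ z) :=
  ⟨hI.1, hI.2.concat (hball.pathInSlice_segPath hz)⟩

theorem sliceOpen.eventually_mem_sliceUnits_extendPath (hΩ : sliceOpen n Ω)
    (hI : I ∈ sliceUnits n Ω γ) : ∀ᶠ z in 𝓝 (γ 1), I ∈ sliceUnits n Ω (extendPath n γ z) := by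
  obtain ⟨r, hr, hball⟩ := Metric.eventually_nhds_iff_ball.1
    (hΩ.eventually_mem hI.1 (hI.2 1 (right_mem_Icc.2 zero_le_one)))
  filter_upwards [ball_mem_nhds (γ 1) hr] with z hz using mem_sliceUnits_extendPath hI hball hz

theorem isStemOf.eq_stemEval_extendPath {f : (Fin n → ℍ) → ℍ} {F : (ℝ → Fin n → ℂ) → ℍ × ℍ}
    (hF : isStemOf n Ω f F) (hγ : γ ∈ PathsC n) {z : Fin n → ℂ}
    (hI : I ∈ sliceUnits n Ω (extendPath n γ z)) :
    f (PsiI n I z) = stemEval I (F (extendPath n γ z)) := by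
  simpa only [extendPath_one, stemEval_apply] using hF _ ⟨extendPath_mem_PathsC hγ z, I, hI⟩ I hI

theorem isStemOf.eventually_cauchyRiemannAt {f : (Fin n → ℍ) → ℍ} {F : (ℝ → Fin n → ℂ) → ℍ × ℍ}
    (hF : isStemOf n Ω f F) (hf : SliceRegular n Ω f) (hΩ : sliceOpen n Ω) (hγ : γ ∈ PathsC n)
    (hunits : (sliceUnits n Ω γ).Nontrivial) :
    ∀ᶠ z in 𝓝 (γ 1), CauchyRiemannAt (stemRotation ℍ) (fun w => F (extendPath n γ w)) z := by
  obtain ⟨I, hI, J, hJ, hIJ⟩ := hunits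
  have hnear := (hΩ.eventually_mem_sliceUnits_extendPath hI).and
    (hΩ.eventually_mem_sliceUnits_extendPath hJ)
  have hsolve : ∀ᶠ z in 𝓝 (γ 1), F (extendPath n γ z) =
      (stemEvalEquiv hIJ).symm (f (PsiI n I z), f (PsiI n J z)) :=
    hnear.mono fun z hz => by
      rw [ContinuousLinearEquiv.eq_symm_apply, stemEvalEquiv_apply,
        hF.eq_stemEval_extendPath hγ hz.1, hF.eq_stemEval_extendPath hγ hz.2]
  have hmem : (1 : ℝ) ∈ Icc 0 1 := right_mem_Icc.2 zero_le_one
  filter_upwards [hsolve.eventually_nhds, hΩ.eventually_mem hI.1 (hI.2 1 hmem),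
    hΩ.eventually_mem hJ.1 (hJ.2 1 hmem)] with z hz hzI hzJ
  exact ((hf.cauchyRiemannAt hΩ hI.1 hzI).stemEvalEquiv_symm hI.1 hJ.1 hIJ
    (hf.cauchyRiemannAt hΩ hJ.1 hzJ)).congr_of_eventuallyEq hz

end Paths

theorem statement4_general {n : ℕ} {Ω₁ Ω₂ : Set (Fin n → ℍ)} (hΩ₁ : sliceOpen n Ω₁)
    (hΩ₂ : sliceOpen n Ω₂) {f : (Fin n → ℍ) → ℍ} (hf : SliceRegular n Ω₂ f)
    {γ : ℝ → Fin n → ℂ} (hγ : γ ∈ PathsIn n Ω₁) (hunits : (sliceUnits n Ω₂ γ).Nontrivial) :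
    ∃ r : ℝ, 0 < r ∧ pathBall n γ r ⊆ PathsIn n Ω₁ ∧ ∀ z ∈ ball (γ 1) r,
      CauchyRiemannAt (stemRotation ℍ) (fun w => stemF n Ω₂ f (extendPath n γ w)) z := by
  obtain ⟨I, hI⟩ := hγ.2
  obtain ⟨r, hr, hball⟩ := Metric.eventually_nhds_iff_ball.1
    ((hΩ₁.eventually_mem_sliceUnits_extendPath hI).and
      ((hf.pathSliceFn hΩ₂).isStemOf_stemF.eventually_cauchyRiemannAt hf hΩ₂ hγ.1 hunits))
  refine ⟨r, hr, ?_, fun z hz => (hball z hz).2⟩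
  rintro _ ⟨z, hz, rfl⟩
  exact ⟨extendPath_mem_PathsC hγ.1 z, I, (hball z hz).1⟩

theorem statement4 (n : ℕ) (hn : 1 ≤ n) (Ω₁ Ω₂ : Set (Fin n → ℍ))
    (hΩ₁ : sliceOpen n Ω₁) (hrc : realPathConnected n Ω₁)
    (hΩ₂ : sliceOpen n Ω₂) (hsp : stemPreserving n Ω₁ Ω₂)
    (f : (Fin n → ℍ) → ℍ) (hf : SliceRegular n Ω₂ f) :
    ∀ γ ∈ PathsIn n Ω₁, ∃ r : ℝ, 0 < r ∧ pathBall n γ r ⊆ PathsIn n Ω₁ ∧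
      DifferentiableOn ℝ (fun z => stemF n Ω₂ f (extendPath n γ z)) (Metric.ball (γ 1) r) ∧
      ∀ z ∈ Metric.ball (γ 1) r, ∀ ℓ : Fin n,
        (fderivWithin ℝ (fun z => stemF n Ω₂ f (extendPath n γ z)) (Metric.ball (γ 1) r) z
            (Pi.single ℓ 1)).1
          - (fderivWithin ℝ (fun z => stemF n Ω₂ f (extendPath n γ z)) (Metric.ball (γ 1) r) z
            (Pi.single ℓ Complex.I)).2 = 0 ∧
        (fderivWithin ℝ (fun z => stemF n Ω₂ f (extendPath n γ z)) (Metric.ball (γ 1) r) z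
            (Pi.single ℓ 1)).2
          + (fderivWithin ℝ (fun z => stemF n Ω₂ f (extendPath n γ z)) (Metric.ball (γ 1) r) z
            (Pi.single ℓ Complex.I)).1 = 0 := by
  intro γ hγ
  obtain ⟨r, hr, hsub, hCR⟩ := statement4_general hΩ₁ hΩ₂ hf hγ (hsp.1 γ hγ)
  exact ⟨r, hr, hsub, cauchyRiemann_equations_of_stemRotation Metric.isOpen_ball hCR⟩
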